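/- arXiv:2211.04953 — 2 statements merged into one kernel-verified Lean document; each statement's English description precedes it below -/
import Mathlib

section
/- Let t₀ > 0 and let g₀ be a holomorphic function on the polydisc {ψ < −t₀} whose Taylor expansion g₀(w) = Σ_{α} b̃_α w^α satisfies Σ_{j=1}^n (α_j+1)/p_j > 1 for every multi-index α with b̃_α ≠ 0. Then lim_{t→+∞} e^{t} ∫_{{ψ < −t}} |g₀|² dλ_n = 0. -/
open MeasureTheory Filter

/-- `psi p w = max_j 2 p_j log |w_j|`. -/
noncomputable def psi {n : ℕ} (p : Fin n → ℝ) (w : Fin n → ℂ) : ℝ :=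
  ⨆ j, 2 * p j * Real.log ‖w j‖

/-- The polydisc `{ψ < s} = Π_j {|w_j| < e^{s/(2 p_j)}}`. -/
noncomputable def polydisc {n : ℕ} (p : Fin n → ℝ) (s : ℝ) : Set (Fin n → ℂ) :=
  {w | ∀ j, ‖w j‖ < Real.exp (s / (2 * p j))}

/-!
On the polydisc `{ψ < -t}` the function is bounded by `∑ α, ‖b α‖ ∏ j, r_j ^ α_j`, where
`r_j = exp (-t / (2 p_j))`. Everything here is exponential in `t`: with `λ α = ∑ j, (α_j + 1) / p_j`
the product is `exp (-(t / 2) (λ α - λ 0))`, and the volume of the polydisc is `π ^ n exp (-t λ 0)`.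
Hence `exp t` times the integral is at most `π ^ n D(t / 2) ^ 2` for the generalized Dirichlet
series `D(s) = ∑ α, ‖b α‖ exp (-s (λ α - 1))`. All exponents occurring in `D` have `λ α - 1 > 0`,
so `D(s) → 0` as `s → ∞` by dominated convergence.
-/

theorem tendsto_tsum_mul_exp_neg_atTop {ι : Type*} {a c : ι → ℝ} {s₀ : ℝ}
    (hc : ∀ i, a i ≠ 0 → 0 < c i) (hsum : Summable fun i => a i * Real.exp (-(s₀ * c i))) :
    Tendsto (fun s => ∑' i, a i * Real.exp (-(s * c i))) atTop (nhds 0) := by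
  have termwise (i : ι) : Tendsto (fun s => a i * Real.exp (-(s * c i))) atTop (nhds 0) := by
    rcases eq_or_ne (a i) 0 with hi | hi
    · simp [hi]
    · simpa using ((Real.tendsto_exp_neg_atTop_nhds_zero.comp
        (tendsto_id.atTop_mul_const (hc i hi))).const_mul (a i))
  have dominated : ∀ᶠ s in atTop, ∀ i,
      ‖a i * Real.exp (-(s * c i))‖ ≤ ‖a i * Real.exp (-(s₀ * c i))‖ := by
    filter_upwards [eventually_ge_atTop s₀] with s hs i
    rcases eq_or_ne (a i) 0 with hi | hi
    · simp [hi]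
    · have := hc i hi
      simp only [norm_mul, Real.norm_eq_abs, Real.abs_exp]
      gcongr
  simpa using tendsto_tsum_of_dominated_convergence hsum.norm termwise dominated

section PowerSeries

variable {𝕜 ι : Type*} [NormedField 𝕜] [Fintype ι]

theorem norm_mul_prod_pow (b : 𝕜) (w : ι → 𝕜) (α : ι → ℕ) :
    ‖b * ∏ j, w j ^ α j‖ = ‖b‖ * ∏ j, ‖w j‖ ^ α j := by
  simp

theorem norm_le_tsum_of_hasSum_mul_prod_pow {b : (ι → ℕ) → 𝕜} {w : ι → 𝕜} {r : ι → ℝ} {x : 𝕜}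
    (hx : HasSum (fun α => b α * ∏ j, w j ^ α j) x) (hw : ∀ j, ‖w j‖ ≤ r j)
    (hr : Summable fun α => ‖b α‖ * ∏ j, r j ^ α j) :
    ‖x‖ ≤ ∑' α, ‖b α‖ * ∏ j, r j ^ α j := by
  refine hx.norm_le_of_bounded hr.hasSum fun α => ?_
  rw [norm_mul_prod_pow]
  gcongr with j
  exact hw j

end PowerSeries

/-- The threshold `λ α = ∑ j, (α j + 1) / p j` of the monomial `w ^ α` for the weight
`ψ = max_j 2 p_j log |w_j|`: for positive `p`, `|w ^ α|² exp (-c ψ)` is integrable near the origin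
exactly when `c < λ α`. In particular `λ 0` governs the volume of `{ψ < s}`. -/
noncomputable def jumpingNumber {ι : Type*} [Fintype ι] (p : ι → ℝ) (α : ι → ℕ) : ℝ :=
  ∑ j, ((α j : ℝ) + 1) / p j

theorem prod_exp_div_pow_eq_exp_jumpingNumber {ι : Type*} [Fintype ι] (p : ι → ℝ) (s : ℝ)
    (α : ι → ℕ) :
    ∏ j, Real.exp (s / (2 * p j)) ^ α j =
      Real.exp (s / 2 * (jumpingNumber p α - jumpingNumber p 0)) := by
  simp only [jumpingNumber, ← Finset.sum_sub_distrib, Finset.mul_sum, Real.exp_sum]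
  refine Finset.prod_congr rfl fun j _ => ?_
  rw [← Real.exp_nat_mul]
  congr 1
  simp only [Pi.zero_apply, Nat.cast_zero]
  ring

section Polydisc

variable {n : ℕ} {p : Fin n → ℝ}

theorem polydisc_eq_pi_ball (p : Fin n → ℝ) (s : ℝ) :
    polydisc p s = Set.univ.pi fun j => Metric.ball 0 (Real.exp (s / (2 * p j))) := by
  ext w
  simp [polydisc]

theorem measurableSet_polydisc (p : Fin n → ℝ) (s : ℝ) : MeasurableSet (polydisc p s) := by
  rw [polydisc_eq_pi_ball]
  exact MeasurableSet.univ_pi fun _ => measurableSet_ball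

theorem polydisc_mono (hp : ∀ j, 0 < p j) : Monotone (polydisc p) := by
  intro s t hst w hw j
  have := hp j
  exact (hw j).trans_le (by gcongr)

-- Only an inclusion: as `Real.log 0 = 0`, for `s ≤ 0` the left side misses every `{w j = 0}`.
theorem setOf_psi_lt_subset_polydisc (hp : ∀ j, 0 < p j) (s : ℝ) :
    {w | psi p w < s} ⊆ polydisc p s := by
  intro w hw j
  rcases eq_or_ne (w j) 0 with hj | hj
  · simpa [hj] using Real.exp_pos _
  · have hlog : 2 * p j * Real.log ‖w j‖ < s :=
      (le_ciSup (f := fun j => 2 * p j * Real.log ‖w j‖)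
        (Set.finite_range _).bddAbove j).trans_lt hw
    have := hp j
    rwa [← Real.log_lt_iff_lt_exp (norm_pos_iff.2 hj), lt_div_iff₀' (by positivity)]

theorem volume_polydisc (p : Fin n → ℝ) (s : ℝ) :
    volume (polydisc p s) =
      ENNReal.ofReal (Real.pi ^ n * Real.exp (s * jumpingNumber p 0)) := by
  have volume_factor (j : Fin n) :
      volume (Metric.ball (0 : ℂ) (Real.exp (s / (2 * p j)))) =
        ENNReal.ofReal (Real.pi * Real.exp (s * (1 / p j))) := by
    rw [Complex.volume_ball, ← ENNReal.ofReal_coe_nnreal, NNReal.coe_real_pi,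
      ← ENNReal.ofReal_pow (Real.exp_pos _).le, ← ENNReal.ofReal_mul (by positivity),
      ← Real.exp_nat_mul, mul_comm]
    congr 3
    push_cast
    ring
  rw [polydisc_eq_pi_ball, volume_pi_pi, Finset.prod_congr rfl fun j _ => volume_factor j,
    ← ENNReal.ofReal_prod_of_nonneg fun _ _ => by positivity, Finset.prod_mul_distrib,
    ← Real.exp_sum]
  simp [jumpingNumber, Finset.mul_sum]

theorem setLIntegral_polydisc_norm_sq_le {E : Type*} [NormedAddCommGroup E]
    {g : (Fin n → ℂ) → E} {s M : ℝ} (hg : ∀ w ∈ polydisc p s, ‖g w‖ ≤ M) :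
    ∫⁻ w in polydisc p s, ENNReal.ofReal (‖g w‖ ^ 2) ≤
      ENNReal.ofReal (Real.pi ^ n * Real.exp (s * jumpingNumber p 0) * M ^ 2) := by
  calc
    ∫⁻ w in polydisc p s, ENNReal.ofReal (‖g w‖ ^ 2)
      ≤ ∫⁻ _ in polydisc p s, ENNReal.ofReal (M ^ 2) :=
        setLIntegral_mono' (measurableSet_polydisc p s) fun w hw => by
          gcongr
          exact hg w hw
    _ = ENNReal.ofReal (Real.pi ^ n * Real.exp (s * jumpingNumber p 0) * M ^ 2) := by
        rw [setLIntegral_const, volume_polydisc, ← ENNReal.ofReal_mul (by positivity), mul_comm]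

end Polydisc

section TaylorSeries

variable {n : ℕ} {p : Fin n → ℝ} {b : (Fin n → ℕ) → ℂ}

/-- The generalized Dirichlet series `∑ α, ‖b α‖ exp (-s (λ α - 1))` whose square at `s = t / 2`
controls `exp t` times the integral over `{ψ < -t}` of `|∑ α, b α w ^ α|²`. -/
noncomputable def dirichletMajorant (p : Fin n → ℝ) (b : (Fin n → ℕ) → ℂ) (s : ℝ) : ℝ :=
  ∑' α, ‖b α‖ * Real.exp (-(s * (jumpingNumber p α - 1)))

theorem norm_mul_prod_exp_pow (p : Fin n → ℝ) (b : (Fin n → ℕ) → ℂ) (t : ℝ) (α : Fin n → ℕ) :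
    ‖b α‖ * ∏ j, Real.exp (-t / (2 * p j)) ^ α j =
      Real.exp (t / 2 * (jumpingNumber p 0 - 1)) *
        (‖b α‖ * Real.exp (-(t / 2 * (jumpingNumber p α - 1)))) := by
  rw [prod_exp_div_pow_eq_exp_jumpingNumber, mul_left_comm, ← Real.exp_add]
  ring_nf

theorem summable_norm_mul_prod_exp_pow {s s₀ : ℝ} (hp : ∀ j, 0 < p j) (hs : s < s₀)
    (hb : ∀ w ∈ polydisc p s₀, Summable fun α => b α * ∏ j, w j ^ α j) :
    Summable fun α => ‖b α‖ * ∏ j, Real.exp (s / (2 * p j)) ^ α j := by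
  have polyradius_mem : (fun j => (Real.exp (s / (2 * p j)) : ℂ)) ∈ polydisc p s₀ := by
    intro j
    have := hp j
    rw [Complex.norm_of_nonneg (Real.exp_pos _).le]
    gcongr
  simpa only [norm_mul_prod_pow, Complex.norm_of_nonneg (Real.exp_pos _).le]
    using (hb _ polyradius_mem).norm

theorem tendsto_dirichletMajorant_atTop {t₀ : ℝ} (hp : ∀ j, 0 < p j)
    (hb : ∀ w ∈ polydisc p (-t₀), Summable fun α => b α * ∏ j, w j ^ α j)
    (hcoef : ∀ α, b α ≠ 0 → 1 < jumpingNumber p α) :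
    Tendsto (dirichletMajorant p b) atTop (nhds 0) := by
  have hsum := summable_norm_mul_prod_exp_pow hp (neg_lt_neg (lt_add_one t₀)) hb
  simp only [norm_mul_prod_exp_pow] at hsum
  exact tendsto_tsum_mul_exp_neg_atTop
    (fun α hα => sub_pos.2 (hcoef α (norm_ne_zero_iff.1 hα)))
    ((summable_mul_left_iff (Real.exp_ne_zero _)).1 hsum)

theorem norm_le_exp_mul_dirichletMajorant {g : (Fin n → ℂ) → ℂ} {t t₀ : ℝ} (hp : ∀ j, 0 < p j)
    (ht : t₀ < t)
    (hg : ∀ w ∈ polydisc p (-t₀), HasSum (fun α => b α * ∏ j, w j ^ α j) (g w))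
    {w : Fin n → ℂ} (hw : w ∈ polydisc p (-t)) :
    ‖g w‖ ≤ Real.exp (t / 2 * (jumpingNumber p 0 - 1)) * dirichletMajorant p b (t / 2) := by
  have hsum := summable_norm_mul_prod_exp_pow hp (neg_lt_neg ht) fun w hw => (hg w hw).summable
  have hbound := norm_le_tsum_of_hasSum_mul_prod_pow
    (hg w (polydisc_mono hp (neg_le_neg ht.le) hw)) (fun j => (hw j).le) hsum
  simpa only [dirichletMajorant, norm_mul_prod_exp_pow, tsum_mul_left] using hbound

theorem exp_mul_setLIntegral_polydisc_le {g : (Fin n → ℂ) → ℂ} {t t₀ : ℝ} (hp : ∀ j, 0 < p j)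
    (ht : t₀ < t)
    (hg : ∀ w ∈ polydisc p (-t₀), HasSum (fun α => b α * ∏ j, w j ^ α j) (g w)) :
    ENNReal.ofReal (Real.exp t) * ∫⁻ w in polydisc p (-t), ENNReal.ofReal (‖g w‖ ^ 2) ≤
      ENNReal.ofReal (Real.pi ^ n * dirichletMajorant p b (t / 2) ^ 2) := by
  set l := jumpingNumber p 0
  set D := dirichletMajorant p b (t / 2)
  have exponents_cancel :
      Real.exp t * Real.exp (-t * l) * Real.exp (t / 2 * (l - 1)) ^ 2 = 1 := by
    rw [← Real.exp_nat_mul, ← Real.exp_add, ← Real.exp_add, Real.exp_eq_one_iff]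
    push_cast
    ring
  calc
    ENNReal.ofReal (Real.exp t) * ∫⁻ w in polydisc p (-t), ENNReal.ofReal (‖g w‖ ^ 2)
      ≤ ENNReal.ofReal (Real.exp t) * ENNReal.ofReal
          (Real.pi ^ n * Real.exp (-t * l) * (Real.exp (t / 2 * (l - 1)) * D) ^ 2) := by
        gcongr
        exact setLIntegral_polydisc_norm_sq_le fun w hw =>
          norm_le_exp_mul_dirichletMajorant hp ht hg hw
    _ = ENNReal.ofReal (Real.pi ^ n * D ^ 2) := by
        rw [← ENNReal.ofReal_mul (Real.exp_pos t).le]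
        congr 1
        linear_combination (Real.pi ^ n * D ^ 2) * exponents_cancel

end TaylorSeries

theorem stmt_8 (n : ℕ) (hn : 0 < n) (p : Fin n → ℝ) (hp : ∀ j, 0 < p j)
    (t₀ : ℝ) (ht₀ : 0 < t₀) (g₀ : (Fin n → ℂ) → ℂ) (b : (Fin n → ℕ) → ℂ)
    (hg₀ : DifferentiableOn ℂ g₀ (polydisc p (-t₀)))
    (hTaylor : ∀ w ∈ polydisc p (-t₀),
      HasSum (fun α : Fin n → ℕ => b α * ∏ j, (w j) ^ (α j)) (g₀ w))
    (hcoef : ∀ α : Fin n → ℕ, b α ≠ 0 → 1 < ∑ j, ((α j : ℝ) + 1) / p j) :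
    Filter.Tendsto (fun t : ℝ =>
        ENNReal.ofReal (Real.exp t) *
          ∫⁻ w in {w : Fin n → ℂ | psi p w < -t}, ENNReal.ofReal (‖g₀ w‖ ^ 2))
      Filter.atTop (nhds 0) := by
  have majorant_tendsto : Tendsto (fun t : ℝ => dirichletMajorant p b (t / 2)) atTop (nhds 0) :=
    (tendsto_dirichletMajorant_atTop hp (fun w hw => (hTaylor w hw).summable) hcoef).comp
      (tendsto_id.atTop_div_const two_pos)
  have bound_tendsto : Tendsto
      (fun t : ℝ => ENNReal.ofReal (Real.pi ^ n * dirichletMajorant p b (t / 2) ^ 2))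
      atTop (nhds 0) := by
    simpa using ENNReal.tendsto_ofReal ((majorant_tendsto.pow 2).const_mul (Real.pi ^ n))
  refine tendsto_of_tendsto_of_tendsto_of_le_of_le' tendsto_const_nhds bound_tendsto
    (Eventually.of_forall fun _ => zero_le) ?_
  filter_upwards [eventually_gt_atTop t₀] with t ht
  calc
    _ ≤ ENNReal.ofReal (Real.exp t) * ∫⁻ w in polydisc p (-t), ENNReal.ofReal (‖g₀ w‖ ^ 2) := by
      gcongr
      exact setOf_psi_lt_subset_polydisc hp (-t)
    _ ≤ _ := exp_mul_setLIntegral_polydisc_le hp ht hTaylor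
end

section
/- Let n ≥ 2, and let f be a holomorphic function on a neighborhood of the origin of ℂⁿ such that |f|² e^{−ψ} is Lebesgue integrable on some neighborhood of the origin. Let γ be a nonnegative integer with (γ+1)/p_n < 1, and define ψ̃ on ℂ^{n−1} by ψ̃(w₁,…,w_{n−1}) = max_{1≤j≤n−1} 2 p_j (1 − (γ+1)/p_n) log|w_j|. Then for every integer σ with 0 ≤ σ ≤ γ, the holomorphic function (w₁,…,w_{n−1}) ↦ (∂^σ f/∂w_n^σ)(w₁,…,w_{n−1},0) has the property that its squared modulus times e^{−ψ̃} is Lebesgue integrable on some neighborhood of the origin of ℂ^{n−1}. -/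
open MeasureTheory Filter

open Function Metric Real Set Topology

/-!
Write a point as `(w, z)` with `z` the last coordinate, put `q = p_n`, and let `S` be the value at
`w` of the weight `ψ` formed with the remaining coordinates. On the disc `|z| < r = exp (S / (2 q))`
the weight `ψ (w, z)` is the constant `S`, and Cauchy's formula averaged over this disc bounds
`r ^ (2 (σ + 1)) |∂^σ f (w, 0)|²` by a multiple of `∫ |f (w, z)|² dz`. Since
`exp (-S) r ^ (2 (σ + 1)) = exp (-(1 - (σ + 1) / q) S)`, this controls
`|∂^σ f (w, 0)|² exp (-ψ̃ w)`, and Fubini's theorem finishes the argument.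
The disc fits into the domain as soon as `S` is sufficiently negative, which holds near the origin
(almost everywhere, given the convention `Real.log 0 = 0`).
-/

section CircleAverage

variable {E : Type*} [NormedAddCommGroup E] [NormedSpace ℝ E] {g : ℂ → E} {c : ℂ} {r : ℝ}

lemma sq_norm_circleAverage_le [CompleteSpace E] (hg : CircleIntegrable g c r)
    (hg2 : CircleIntegrable (fun z => ‖g z‖ ^ 2) c r) :
    ‖circleAverage g c r‖ ^ 2 ≤ circleAverage (fun z => ‖g z‖ ^ 2) c r := by
  have hconvex : ConvexOn ℝ univ fun x : E => ‖x‖ ^ 2 :=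
    convexOn_univ_norm.pow (fun x _ => norm_nonneg x) 2
  rw [circleAverage_eq_intervalAverage, circleAverage_eq_intervalAverage,
    uIoc_of_le two_pi_pos.le]
  exact hconvex.map_set_average_le (by fun_prop) isClosed_univ (by simp [pi_pos])
    measure_Ioc_lt_top.ne (by simp) hg.1 hg2.1

lemma setIntegral_Ioo_neg_pi_pi_circleMap :
    ∫ θ in Ioo (-π) π, g (circleMap c r θ) = (2 * π) • circleAverage g c r := by
  rw [circleAverage_eq_integral_add (-π), smul_inv_smul₀ two_pi_pos.ne',
    intervalIntegral.integral_comp_add_right (fun θ => g (circleMap c r θ)), zero_add,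
    show 2 * π + -π = π by ring, intervalIntegral.integral_of_le (by linarith [pi_pos]),
    integral_Ioc_eq_integral_Ioo]

lemma setIntegral_ball_eq_setIntegral_circleMap :
    ∫ z in ball c r, g z =
      ∫ q in Ioo 0 r ×ˢ Ioo (-π) π, q.1 • g (circleMap c q.1 q.2) := by
  have hpolar (q : ℝ × ℝ) : Complex.polarCoord.symm q + c = circleMap c q.1 q.2 := by
    simp [circleMap, Complex.exp_mul_I, add_comm]
  have hindicator : ∀ q ∈ Complex.polarCoord.target,
      q.1 • (ball c r).indicator g (circleMap c q.1 q.2) =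
        (Iio r ×ˢ univ).indicator (fun q => q.1 • g (circleMap c q.1 q.2)) q := by
    rintro ⟨a, θ⟩ ⟨ha, -⟩
    have hmem : circleMap c a θ ∈ ball c r ↔ (a, θ) ∈ Iio r ×ˢ (univ : Set ℝ) := by
      simp [abs_of_pos (show 0 < a from ha), dist_eq_norm]
    by_cases h : circleMap c a θ ∈ ball c r
    · rw [indicator_of_mem h, indicator_of_mem (hmem.1 h)]
    · rw [indicator_of_notMem h, indicator_of_notMem (mt hmem.2 h), smul_zero]
  rw [← integral_indicator measurableSet_ball, ← integral_add_right_eq_self _ c,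
    ← Complex.integral_comp_polarCoord_symm]
  simp only [hpolar]
  rw [setIntegral_congr_fun polarCoord.open_target.measurableSet hindicator,
    setIntegral_indicator (measurableSet_Iio.prod .univ), polarCoord_target, prod_inter_prod,
    inter_univ, Ioi_inter_Iio]

lemma setIntegral_ball_eq_intervalIntegral_circleAverage (hr : 0 ≤ r)
    (hg : ContinuousOn g (closedBall c r)) :
    ∫ z in ball c r, g z = ∫ a in 0..r, (2 * π * a) • circleAverage g c a := by
  have hcont : ContinuousOn (fun q : ℝ × ℝ => q.1 • g (circleMap c q.1 q.2))
      (Icc 0 r ×ˢ Icc (-π) π) := by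
    refine continuousOn_fst.smul (hg.comp circleMap.continuous.continuousOn ?_)
    rintro ⟨a, θ⟩ ⟨⟨ha, har⟩, -⟩
    simpa [dist_eq_norm, abs_of_nonneg ha] using har
  have hint : IntegrableOn (fun q : ℝ × ℝ => q.1 • g (circleMap c q.1 q.2))
      (Ioo 0 r ×ˢ Ioo (-π) π) (volume.prod volume) :=
    (hcont.integrableOn_compact (isCompact_Icc.prod isCompact_Icc)).mono_set
      (prod_mono Ioo_subset_Icc_self Ioo_subset_Icc_self)
  rw [setIntegral_ball_eq_setIntegral_circleMap, Measure.volume_eq_prod, setIntegral_prod _ hint,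
    intervalIntegral.integral_of_le hr, integral_Ioc_eq_integral_Ioo]
  simp only [integral_smul, setIntegral_Ioo_neg_pi_pi_circleMap, smul_smul, mul_comm]

end CircleAverage

section CauchyEstimate

variable {E : Type*} [NormedAddCommGroup E] [NormedSpace ℂ E] [CompleteSpace E]
  {f : ℂ → E} {c : ℂ} {r : ℝ}

lemma iteratedDeriv_eq_circleAverage (hr : 0 < r) (hf : DiffContOnCl ℂ f (ball c r))
    (m : ℕ) :
    iteratedDeriv m f c =
      (m.factorial : ℂ) • circleAverage (fun z => ((z - c) ^ m)⁻¹ • f z) c r := by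
  have hCauchy := hf.circleIntegral_one_div_sub_center_pow_smul hr m
  have hkernel (z : ℂ) : (z - c)⁻¹ • ((z - c) ^ m)⁻¹ • f z = (1 / (z - c) ^ (m + 1)) • f z := by
    rw [smul_smul, ← mul_inv, ← pow_succ', one_div]
  have hfactor :
      (m.factorial : ℂ) * ((2 * π * Complex.I)⁻¹ * (2 * π * Complex.I / m.factorial)) = 1 := by
    have := m.factorial_ne_zero
    field_simp [Complex.two_pi_I_ne_zero]
  simp only [circleAverage_eq_circleIntegral hr.ne', hkernel, hCauchy, smul_smul, hfactor, one_smul]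

lemma sq_norm_iteratedDeriv_le_circleAverage (hr : 0 < r) (hf : DiffContOnCl ℂ f (ball c r))
    (m : ℕ) :
    (r ^ m / m.factorial * ‖iteratedDeriv m f c‖) ^ 2 ≤ circleAverage (fun z => ‖f z‖ ^ 2) c r := by
  have hfcont : ContinuousOn f (sphere c r) :=
    hf.continuousOn_ball.mono sphere_subset_closedBall
  have hcont : ContinuousOn (fun z => ((z - c) ^ m)⁻¹ • f z) (sphere c r) := by
    refine ContinuousOn.smul (ContinuousOn.inv₀ (by fun_prop) fun z hz => ?_) hfcont
    exact pow_ne_zero _ (sub_ne_zero.2 (ne_of_mem_sphere hz hr.ne'))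
  have hnorm : ∀ z ∈ sphere c |r|, ‖((z - c) ^ m)⁻¹ • f z‖ ^ 2 = ((r ^ m)⁻¹) ^ 2 • ‖f z‖ ^ 2 := by
    intro z hz
    rw [abs_of_pos hr, mem_sphere_iff_norm] at hz
    rw [norm_smul, norm_inv, norm_pow, hz, mul_pow, smul_eq_mul]
  have hJensen := sq_norm_circleAverage_le (hcont.circleIntegrable hr.le)
    ((hcont.norm.pow 2).circleIntegrable hr.le)
  rw [circleAverage_congr_sphere hnorm, circleAverage_fun_smul, smul_eq_mul, inv_pow,
    ← div_eq_inv_mul, le_div_iff₀' (by positivity)] at hJensen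
  rw [iteratedDeriv_eq_circleAverage hr hf, norm_smul, Complex.norm_natCast]
  refine le_of_eq_of_le ?_ hJensen
  have := m.factorial_ne_zero
  field_simp

lemma sq_norm_iteratedDeriv_le_setIntegral_ball (hr : 0 < r) (hf : DiffContOnCl ℂ f (ball c r))
    (m : ℕ) :
    π / ((m + 1) * m.factorial ^ 2) * r ^ (2 * (m + 1)) * ‖iteratedDeriv m f c‖ ^ 2 ≤
      ∫ z in ball c r, ‖f z‖ ^ 2 := by
  have hcont : ContinuousOn (fun z => ‖f z‖ ^ 2) (closedBall c r) := hf.continuousOn_ball.norm.pow 2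
  have haverage : ContinuousOn (circleAverage (fun z => ‖f z‖ ^ 2) c) (Icc 0 r) :=
    ContinuousOn.circleAverage (hcont.mono fun z hz => mem_closedBall_iff_norm.2 hz.2)
      fun a ha => ha.1
  rw [setIntegral_ball_eq_intervalIntegral_circleAverage hr.le hcont]
  calc π / ((m + 1) * m.factorial ^ 2) * r ^ (2 * (m + 1)) * ‖iteratedDeriv m f c‖ ^ 2
      = ∫ a in 0..r, 2 * π * (‖iteratedDeriv m f c‖ / m.factorial) ^ 2 * a ^ (2 * m + 1) := by
        rw [intervalIntegral.integral_const_mul, integral_pow]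
        push_cast
        field_simp
        simp only [zero_pow (by lia : 2 * m + 1 + 1 ≠ 0), sub_zero]
        ring
    _ ≤ ∫ a in 0..r, (2 * π * a) • circleAverage (fun z => ‖f z‖ ^ 2) c a := by
        refine intervalIntegral.integral_mono_on_of_le_Ioo hr.le
          (Continuous.intervalIntegrable (by fun_prop) _ _)
          (ContinuousOn.intervalIntegrable_of_Icc hr.le (by fun_prop)) fun a ⟨ha, har⟩ => ?_
        have hcircle := sq_norm_iteratedDeriv_le_circleAverage ha
          (hf.mono (ball_subset_ball har.le)) m
        calc 2 * π * (‖iteratedDeriv m f c‖ / m.factorial) ^ 2 * a ^ (2 * m + 1)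
            = 2 * π * a * (a ^ m / m.factorial * ‖iteratedDeriv m f c‖) ^ 2 := by ring
          _ ≤ (2 * π * a) • circleAverage (fun z => ‖f z‖ ^ 2) c a := by
            rw [smul_eq_mul]; gcongr

lemma continuousOn_iteratedDeriv_of_continuousOn_uncurry {X : Type*} [TopologicalSpace X]
    {F : X → ℂ → E} {s : Set X} (hr : 0 < r)
    (hF : ContinuousOn (uncurry F) (s ×ˢ sphere c r))
    (hFd : ∀ x ∈ s, DiffContOnCl ℂ (F x) (ball c r)) (m : ℕ) :
    ContinuousOn (fun x => iteratedDeriv m (F x) c) s := by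
  refine ContinuousOn.congr (f := fun x => (m.factorial : ℂ) •
    circleAverage (fun z => ((z - c) ^ m)⁻¹ • F x z) c r) ?_ fun x hx =>
      iteratedDeriv_eq_circleAverage hr (hFd x hx) m
  rw [continuousOn_iff_continuous_domRestrict]
  refine Continuous.const_smul (Continuous.const_smul
    (intervalIntegral.continuous_parametric_intervalIntegral_of_continuous' ?_ _ _) _) _
  have hFcircle : Continuous fun q : s × ℝ => F q.1 (circleMap c r q.2) :=
    hF.comp_continuous (f := fun q : s × ℝ => ((q.1 : X), circleMap c r q.2)) (by fun_prop)
      fun q => ⟨q.1.2, circleMap_mem_sphere c hr.le q.2⟩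
  refine Continuous.smul (Continuous.inv₀ (by fun_prop) fun q => ?_) hFcircle
  exact pow_ne_zero _ (sub_ne_zero.2 (circleMap_ne_center hr.ne'))

end CauchyEstimate

section WeightedEstimate

variable {E : Type*} [NormedAddCommGroup E] [NormedSpace ℂ E] [CompleteSpace E]
  {c : ℂ} {q ρ : ℝ}

lemma two_mul_mul_log_norm_le_of_mem_ball {z : ℂ} {S : ℝ} (hq : 0 < q)
    (hz : z ∈ ball c (exp (S / (2 * q)))) (hzc : z ≠ c) : 2 * q * log ‖z - c‖ ≤ S := by
  have hlog : log ‖z - c‖ < S / (2 * q) :=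
    (log_lt_iff_lt_exp (norm_sub_pos_iff.2 hzc)).2 (mem_ball_iff_norm.1 hz)
  rw [lt_div_iff₀' (by positivity)] at hlog
  exact hlog.le

lemma setIntegral_ball_mul_exp_neg_max {g : ℂ → ℝ} (hq : 0 < q) (S : ℝ) :
    ∫ z in ball c (exp (S / (2 * q))), g z * exp (-max S (2 * q * log ‖z - c‖)) =
      exp (-S) * ∫ z in ball c (exp (S / (2 * q))), g z := by
  rw [← integral_const_mul]
  refine setIntegral_congr_ae measurableSet_ball ?_
  -- At the centre `Real.log 0 = 0`, so the weight there need not be `exp (-S)`.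
  filter_upwards [Measure.ae_ne volume c] with z hzc hz
  rw [max_eq_left (two_mul_mul_log_norm_le_of_mem_ball hq hz hzc), mul_comm]

lemma sq_norm_iteratedDeriv_mul_exp_le_setIntegral_ball {f : ℂ → E} {S : ℝ} (hq : 0 < q)
    (hS : exp (S / (2 * q)) < ρ) (hf : DifferentiableOn ℂ f (ball c ρ))
    (hint : IntegrableOn (fun z => ‖f z‖ ^ 2 * exp (-max S (2 * q * log ‖z - c‖))) (ball c ρ))
    (m : ℕ) :
    π / ((m + 1) * m.factorial ^ 2) *
        (‖iteratedDeriv m f c‖ ^ 2 * exp (-((1 - (m + 1) / q) * S))) ≤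
      ∫ z in ball c ρ, ‖f z‖ ^ 2 * exp (-max S (2 * q * log ‖z - c‖)) := by
  set r := exp (S / (2 * q)) with hr
  have hclosed : DiffContOnCl ℂ f (ball c r) := hf.diffContOnCl_ball (closedBall_subset_ball hS)
  have hexp : exp (-((1 - (m + 1) / q) * S)) = exp (-S) * r ^ (2 * (m + 1)) := by
    rw [hr, ← exp_nat_mul, ← exp_add]
    congr 1
    push_cast
    field_simp
    ring
  calc π / ((m + 1) * m.factorial ^ 2) *
        (‖iteratedDeriv m f c‖ ^ 2 * exp (-((1 - (m + 1) / q) * S)))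
      = exp (-S) * (π / ((m + 1) * m.factorial ^ 2) * r ^ (2 * (m + 1)) *
          ‖iteratedDeriv m f c‖ ^ 2) := by rw [hexp]; ring
    _ ≤ exp (-S) * ∫ z in ball c r, ‖f z‖ ^ 2 := by
        gcongr
        exact sq_norm_iteratedDeriv_le_setIntegral_ball (exp_pos _) hclosed m
    _ = ∫ z in ball c r, ‖f z‖ ^ 2 * exp (-max S (2 * q * log ‖z - c‖)) :=
        (setIntegral_ball_mul_exp_neg_max hq S).symm
    _ ≤ ∫ z in ball c ρ, ‖f z‖ ^ 2 * exp (-max S (2 * q * log ‖z - c‖)) :=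
        setIntegral_mono_set hint (ae_of_all _ fun z => by positivity)
          (ball_subset_ball hS.le).eventuallyLE

theorem integrableOn_sq_norm_iteratedDeriv_mul_exp {X : Type*} [TopologicalSpace X]
    [MeasurableSpace X] [OpensMeasurableSpace X] {μ : Measure X} [SFinite μ] {s : Set X}
    {F : X → ℂ → E} {φ θ : X → ℝ} {m : ℕ} (hq : 0 < q) (hs : MeasurableSet s) (hρ : 0 < ρ)
    (hFcont : ContinuousOn (uncurry F) (s ×ˢ ball c ρ))
    (hF : ∀ x ∈ s, DifferentiableOn ℂ (F x) (ball c ρ))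
    (hφ : ∀ x ∈ s, exp (φ x / (2 * q)) < ρ)
    (hθ : AEMeasurable θ (μ.restrict s)) (hφθ : ∀ x ∈ s, (1 - (m + 1) / q) * φ x ≤ θ x)
    (hint : IntegrableOn
      (fun x : X × ℂ => ‖F x.1 x.2‖ ^ 2 * exp (-max (φ x.1) (2 * q * log ‖x.2 - c‖)))
      (s ×ˢ ball c ρ) (μ.prod volume)) :
    IntegrableOn (fun x => ‖iteratedDeriv m (F x) c‖ ^ 2 * exp (-θ x)) s μ := by
  rw [IntegrableOn, ← Measure.prod_restrict] at hint
  have hsphere : sphere c (ρ / 2) ⊆ ball c ρ :=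
    sphere_subset_closedBall.trans (closedBall_subset_ball (half_lt_self hρ))
  have hderiv : ContinuousOn (fun x => iteratedDeriv m (F x) c) s :=
    continuousOn_iteratedDeriv_of_continuousOn_uncurry (half_pos hρ)
      (hFcont.mono (prod_mono_right hsphere))
      (fun x hx => (hF x hx).diffContOnCl_ball (closedBall_subset_ball (half_lt_self hρ))) m
  have hmeas : AEStronglyMeasurable (fun x => ‖iteratedDeriv m (F x) c‖ ^ 2 * exp (-θ x))
      (μ.restrict s) :=
    ((hderiv.norm.pow 2).aestronglyMeasurable hs).mul hθ.neg.exp.aestronglyMeasurable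
  refine (hint.integral_prod_left.const_mul (π / ((m + 1) * m.factorial ^ 2))⁻¹).mono' hmeas ?_
  filter_upwards [hint.prod_right_ae, ae_restrict_mem hs] with x hx hxs
  rw [norm_of_nonneg (by positivity), le_inv_mul_iff₀ (by positivity)]
  calc π / ((m + 1) * m.factorial ^ 2) * (‖iteratedDeriv m (F x) c‖ ^ 2 * exp (-θ x))
      ≤ π / ((m + 1) * m.factorial ^ 2) *
          (‖iteratedDeriv m (F x) c‖ ^ 2 * exp (-((1 - (m + 1) / q) * φ x))) := by
        gcongr
        exact hφθ x hxs
    _ ≤ _ := sq_norm_iteratedDeriv_mul_exp_le_setIntegral_ball hq (hφ x hxs) (hF x hxs) hx m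

end WeightedEstimate

section Psi

variable {n : ℕ}

lemma ciSup_fin_succ_eq_max [NeZero n] (g : Fin (n + 1) → ℝ) :
    ⨆ j, g j = max (⨆ j : Fin n, g j.castSucc) (g (Fin.last n)) := by
  refine le_antisymm (ciSup_le (Fin.forall_fin_succ'.2 ⟨fun j => ?_, le_max_right _ _⟩))
    (max_le (ciSup_le fun j => Finite.le_ciSup g _) (Finite.le_ciSup g _))
  exact (Finite.le_ciSup (fun j : Fin n => g j.castSucc) j).trans (le_max_left _ _)

lemma psi_snoc [NeZero n] (p : Fin (n + 1) → ℝ) (w : Fin n → ℂ) (z : ℂ) :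
    psi p (Fin.snoc w z) =
      max (psi (fun j => p j.castSucc) w) (2 * p (Fin.last n) * log ‖z‖) := by
  simp only [psi, ciSup_fin_succ_eq_max, Fin.snoc_castSucc, Fin.snoc_last]

lemma mul_psi_le [NeZero n] (a : ℝ) (p : Fin n → ℝ) (w : Fin n → ℂ) :
    a * psi p w ≤ psi (fun j => p j * a) w := by
  obtain ⟨k, hk⟩ := exists_eq_ciSup_of_finite (f := fun j => 2 * p j * log ‖w j‖)
  calc a * psi p w = 2 * (p k * a) * log ‖w k‖ := by rw [psi, ← hk]; ring
    _ ≤ psi (fun j => p j * a) w := Finite.le_ciSup (fun j => 2 * (p j * a) * log ‖w j‖) k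

lemma measurable_psi (p : Fin n → ℝ) : Measurable (psi p) :=
  Measurable.iSup fun j => by fun_prop

-- `ae volume` discards the coordinate hyperplanes, on which `Real.log 0 = 0` spoils the limit.
lemma tendsto_psi_atBot [NeZero n] {p : Fin n → ℝ} (hp : ∀ j, 0 < p j) :
    Tendsto (psi p) (𝓝 0 ⊓ ae volume) atBot := by
  have hterm (j : Fin n) :
      Tendsto (fun w : Fin n → ℂ => 2 * p j * log ‖w j‖) (𝓝 0 ⊓ ae volume) atBot := by
    have hnorm : Tendsto (fun w : Fin n → ℂ => ‖w j‖) (𝓝 0 ⊓ ae volume) (𝓝[≠] 0) := by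
      refine tendsto_nhdsWithin_iff.2 ⟨?_, ?_⟩
      · have hcont : Continuous fun w : Fin n → ℂ => ‖w j‖ := by fun_prop
        exact (hcont.tendsto' 0 0 norm_zero).mono_left inf_le_left
      · filter_upwards [mem_inf_of_right (Measure.ae_eval_ne (fun _ => volume) j (0 : ℂ))]
          with w hw
        exact norm_ne_zero_iff.2 hw
    exact (tendsto_log_nhdsNE_zero.comp hnorm).const_mul_atBot (mul_pos two_pos (hp j))
  refine tendsto_atBot.2 fun b => ?_
  filter_upwards [eventually_all.2 fun j => tendsto_atBot.1 (hterm j) b] with w hw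
  exact ciSup_le hw

end Psi

section Snoc

variable {n : ℕ}

lemma measurableEmbedding_snoc {α : Type*} [MeasurableSpace α] :
    MeasurableEmbedding fun x : (Fin n → α) × α => (Fin.snoc x.1 x.2 : Fin (n + 1) → α) := by
  convert (MeasurableEquiv.prodComm.trans
    (MeasurableEquiv.piFinSuccAbove (fun _ => α) (Fin.last n)).symm).measurableEmbedding using 2
    with x
  exact (Fin.insertNth_last' x.2 x.1).symm

lemma measurePreserving_snoc {α : Type*} [MeasureSpace α] [SigmaFinite (volume : Measure α)] :
    MeasurePreserving fun x : (Fin n → α) × α => (Fin.snoc x.1 x.2 : Fin (n + 1) → α) := by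
  convert (volume_preserving_piFinSuccAbove (fun _ => α) (Fin.last n)).symm.comp
    (Measure.measurePreserving_swap (μ := (volume : Measure (Fin n → α)))
      (ν := (volume : Measure α))) using 2 with x
  · exact (Fin.insertNth_last' x.2 x.1).symm
  · rfl

lemma snoc_mem_ball_zero_iff {α : Type*} [SeminormedAddCommGroup α] {w : Fin n → α} {z : α} {ρ : ℝ}
    (hρ : 0 < ρ) :
    (Fin.snoc w z : Fin (n + 1) → α) ∈ ball 0 ρ ↔ w ∈ ball 0 ρ ∧ z ∈ ball 0 ρ := by
  simp only [mem_ball_zero_iff, pi_norm_lt_iff hρ, Fin.forall_fin_succ', Fin.snoc_castSucc,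
    Fin.snoc_last]

lemma differentiable_snoc {𝕜 : Type*} [NontriviallyNormedField 𝕜] {V : Type*}
    [NormedAddCommGroup V] [NormedSpace 𝕜 V] (w : Fin n → V) :
    Differentiable 𝕜 fun z : V => (Fin.snoc w z : Fin (n + 1) → V) := by
  refine differentiable_pi.2 (Fin.forall_fin_succ'.2 ⟨fun j => ?_, ?_⟩)
  · simp only [Fin.snoc_castSucc]; fun_prop
  · simp only [Fin.snoc_last]; fun_prop

end Snoc

section Restriction

variable {n : ℕ} [NeZero n] {E : Type*} [NormedAddCommGroup E] [NormedSpace ℂ E] [CompleteSpace E]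
  {p : Fin (n + 1) → ℝ} {f : (Fin (n + 1) → ℂ) → E} {γ : ℝ} {σ : ℕ}

lemma integrableOn_sq_norm_iteratedDeriv_snoc_mul_exp {ρ : ℝ} (hρ : 0 < ρ)
    (hp : 0 < p (Fin.last n)) (hf : DifferentiableOn ℂ f (ball 0 ρ))
    (hint : IntegrableOn (fun w => ‖f w‖ ^ 2 * exp (-psi p w)) (ball 0 ρ)) (hσ : σ ≤ γ) :
    IntegrableOn
      (fun w : Fin n → ℂ => ‖iteratedDeriv σ (fun z : ℂ => f (Fin.snoc w z)) 0‖ ^ 2 *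
        exp (-psi (fun j => p j.castSucc * (1 - (γ + 1) / p (Fin.last n))) w))
      (ball 0 ρ ∩ psi (fun j => p j.castSucc) ⁻¹'
        Iio (min 0 (2 * p (Fin.last n) * log ρ))) := by
  have hsnoc {w : Fin n → ℂ} {z : ℂ} (hw : w ∈ ball 0 ρ) (hz : z ∈ ball 0 ρ) :
      (Fin.snoc w z : Fin (n + 1) → ℂ) ∈ ball 0 ρ :=
    (snoc_mem_ball_zero_iff hρ).2 ⟨hw, hz⟩
  refine integrableOn_sq_norm_iteratedDeriv_mul_exp (F := fun w z => f (Fin.snoc w z))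
    (φ := psi fun j => p j.castSucc) hp (measurableSet_ball.inter
      (measurable_psi _ measurableSet_Iio)) hρ ?continuous ?holomorphic ?radius
    (measurable_psi _).aemeasurable ?weight ?integrable
  case continuous =>
    exact hf.continuousOn.comp (Continuous.finSnoc (A := fun _ => ℂ) continuous_fst
      continuous_snd).continuousOn fun x hx => hsnoc hx.1.1 hx.2
  case holomorphic =>
    exact fun w hw => hf.comp (differentiable_snoc w).differentiableOn fun z hz => hsnoc hw.1 hz
  case radius =>
    intro w hw
    rw [← lt_log_iff_exp_lt hρ, div_lt_iff₀' (by positivity)]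
    exact (lt_min_iff.1 hw.2).2
  case weight =>
    intro w hw
    calc (1 - (σ + 1) / p (Fin.last n)) * psi (fun j => p j.castSucc) w
        ≤ (1 - (γ + 1) / p (Fin.last n)) * psi (fun j => p j.castSucc) w := by
          refine mul_le_mul_of_nonpos_right ?_ (lt_min_iff.1 hw.2).1.le
          gcongr
      _ ≤ _ := mul_psi_le _ _ _
  case integrable =>
    have hprod := (measurePreserving_snoc.integrableOn_comp_preimage
      measurableEmbedding_snoc).2 hint
    simp only [comp_def, psi_snoc, sub_zero] at hprod ⊢
    exact hprod.mono_set fun x hx => hsnoc hx.1.1 hx.2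

theorem stmt_9_general (hp : ∀ j, 0 < p j) (hf : ∀ᶠ w in 𝓝 0, DifferentiableAt ℂ f w)
    (hint : IntegrableAtFilter (fun w => ‖f w‖ ^ 2 * exp (-psi p w)) (𝓝 0)) (hσ : σ ≤ γ) :
    IntegrableAtFilter
      (fun w : Fin n → ℂ => ‖iteratedDeriv σ (fun z : ℂ => f (Fin.snoc w z)) 0‖ ^ 2 *
        exp (-psi (fun j => p j.castSucc * (1 - (γ + 1) / p (Fin.last n))) w)) (𝓝 0) := by
  obtain ⟨U, hU, hintU⟩ := hint
  obtain ⟨ρ, hρ, hball⟩ := nhds_basis_ball.mem_iff.1 (inter_mem hf hU)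
  rw [← IntegrableAtFilter.inf_ae_iff]
  exact ⟨_, inter_mem (mem_inf_of_left (ball_mem_nhds 0 hρ))
      (tendsto_psi_atBot (fun j => hp _) (Iio_mem_atBot _)),
    integrableOn_sq_norm_iteratedDeriv_snoc_mul_exp hρ (hp _)
      (fun w hw => (hball hw).1.differentiableWithinAt)
      (hintU.mono_set fun w hw => (hball hw).2) hσ⟩

end Restriction

theorem stmt_9 (n : ℕ) (hn : 1 ≤ n) (p : Fin (n + 1) → ℝ) (hp : ∀ j, 0 < p j)
    (f : (Fin (n + 1) → ℂ) → ℂ) (Ω : Set (Fin (n + 1) → ℂ))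
    (hΩ : Ω ∈ nhds (0 : Fin (n + 1) → ℂ)) (hf : DifferentiableOn ℂ f Ω)
    (hint : ∃ U ∈ nhds (0 : Fin (n + 1) → ℂ), U ⊆ Ω ∧
      IntegrableOn (fun w => ‖f w‖ ^ 2 * Real.exp (-psi p w)) U volume)
    (γ : ℕ) (hγ : ((γ : ℝ) + 1) / p (Fin.last n) < 1)
    (σ : ℕ) (hσ : σ ≤ γ) :
    ∃ V ∈ nhds (0 : Fin n → ℂ),
      IntegrableOn (fun w' : Fin n → ℂ =>
          ‖iteratedDeriv σ (fun z : ℂ => f (Fin.snoc w' z)) 0‖ ^ 2 *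
          Real.exp (-(⨆ j : Fin n,
            2 * p j.castSucc * (1 - ((γ : ℝ) + 1) / p (Fin.last n)) * Real.log ‖w' j‖)))
        V volume := by
  have : NeZero n := ⟨by lia⟩
  obtain ⟨U, hU, -, hintU⟩ := hint
  simpa only [IntegrableAtFilter, psi, ← mul_assoc] using stmt_9_general hp
    (hf.eventually_differentiableAt hΩ) ⟨U, hU, hintU⟩ (Nat.cast_le.2 hσ : (σ : ℝ) ≤ γ)
end
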